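/- Fix M ∈ ℕ, an exponent θ_p ≥ 0, and N > θ_p + 3/2. Let I be an interval with |I| > 2^{M+2}. Then the sum over dyadic lagom intervals J ∈ 𝒟_M (i.e., dyadic J ⊂ 𝔹_{M·2^M} with 2^{−M} ≤ |J| ≤ 2^M) of (|J|/|I|)^{θ_p + 3/2}·(1 + |I|^{−1}|c(I)−c(J)|)^{−N} is bounded by a constant (depending on θ_p, N) times (2^M/|I|)^{θ_p + 1/2}·(1 + M^{−1}·rdist(I, 𝔹_{2^M}))^{−N}. -/

import Mathlib

/-- `diam(I ∪ J)` for intervals given by centers and lengths. -/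
noncomputable def diamUnion (c1 l1 c2 l2 : ℝ) : ℝ :=
  max (c1 + l1 / 2) (c2 + l2 / 2) - min (c1 - l1 / 2) (c2 - l2 / 2)

/-- The relative distance `rdist(I,J) = diam(I ∪ J)/max(|I|,|J|)`. -/
noncomputable def rdistI (c1 l1 c2 l2 : ℝ) : ℝ := diamUnion c1 l1 c2 l2 / max l1 l2

/-- The dyadic interval `[2^{-j}k, 2^{-j}(k+1)]` indexed by `p = (j,k)` is a lagom
interval at scale `M`: `2^{−M} ≤ |J| ≤ 2^M` and `rdist(J, 𝔹_{2^M}) ≤ M`. -/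
def DyadicLagom (M : ℕ) (p : ℤ × ℤ) : Prop :=
  (2 : ℝ) ^ (-(M : ℤ)) ≤ (2 : ℝ) ^ (-p.1) ∧ (2 : ℝ) ^ (-p.1) ≤ 2 ^ M ∧
    rdistI ((2 : ℝ) ^ (-p.1) * (p.2 + 1/2)) ((2 : ℝ) ^ (-p.1)) 0 (2 ^ M) ≤ M

/-!
After rescaling `I` to unit length, the midpoints of the dyadic intervals `J` of length `h` form a
lattice of spacing `δ = h / |I| ≤ 1`, contained in `[-A, A]` with `A = M`. The sum of
`(1 + |y - x|)^(-N)` over any such lattice is `O(1 / δ)`, by comparison with an integral, and the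
lattice has `O(A / δ)` points in `[-A, A]`. For `|x| ≤ A` one has, up to a constant,
`(1 + |y - x|)^(-N) ≤ ((1 + |y - x|)^(-N) + A^(-N)) (1 + |y| / A)^(-N)`, so the intervals of length
`h` contribute `O(δ^(θ + 3/2) · δ⁻¹)` times the desired decay, because `A · A^(-N) ≤ 1`. As
`θ + 1/2 > 0`, summing over the scales `h` is a geometric series dominated by the largest scale.
-/

open Finset MeasureTheory

section IntegralComparison

variable {f : ℝ → ℝ} {δ : ℝ}

theorem summable_and_tsum_comp_mul_nat_le_integral (anti : AntitoneOn f (Set.Ici 0))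
    (integrable : IntegrableOn f (Set.Ioi 0)) (nonneg : ∀ t ∈ Set.Ici 0, 0 ≤ f t) (hδ : 0 < δ) :
    Summable (fun n : ℕ ↦ f (δ * n)) ∧
      ∑' n : ℕ, f (δ * n) ≤ f 0 + δ⁻¹ * ∫ t in Set.Ioi 0, f t := by
  have anti' : AntitoneOn (fun t ↦ f (δ * t)) (Set.Ici 0) := fun s hs t ht hst ↦
    anti (mul_nonneg hδ.le hs) (mul_nonneg hδ.le ht) (mul_le_mul_of_nonneg_left hst hδ.le)
  have integrable' : IntegrableOn (fun t ↦ f (δ * t)) (Set.Ioi 0) := by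
    rwa [integrableOn_Ioi_comp_mul_left_iff f 0 hδ, mul_zero]
  have nonneg' : ∀ t ∈ Set.Ioi 0, 0 ≤ f (δ * t) := fun t ht ↦
    nonneg _ (mul_pos hδ ht).le
  refine ⟨anti'.summable_of_integrableOn_Ioi_zero integrable' nonneg', ?_⟩
  simpa [integral_comp_mul_left_Ioi f 0 hδ] using anti'.tsum_le_integral integrable' nonneg'

theorem sum_comp_le_integral_of_injOn {ι : Type*} {K : Finset ι} {u : ι → ℝ} {g : ι → ℕ}
    (anti : AntitoneOn f (Set.Ici 0)) (integrable : IntegrableOn f (Set.Ioi 0))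
    (nonneg : ∀ t ∈ Set.Ici 0, 0 ≤ f t) (hδ : 0 < δ) (hg : Set.InjOn g K)
    (hu : ∀ k ∈ K, δ * g k ≤ u k) :
    ∑ k ∈ K, f (u k) ≤ f 0 + δ⁻¹ * ∫ t in Set.Ioi 0, f t := by
  have hpos (n : ℕ) : δ * n ∈ Set.Ici (0 : ℝ) := mul_nonneg hδ.le n.cast_nonneg
  obtain ⟨summable, tsum_le⟩ :=
    summable_and_tsum_comp_mul_nat_le_integral anti integrable nonneg hδ
  calc ∑ k ∈ K, f (u k) ≤ ∑ k ∈ K, f (δ * g k) :=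
        sum_le_sum fun k hk ↦ anti (hpos _) ((hpos _).trans (hu k hk)) (hu k hk)
    _ = ∑ n ∈ K.image g, f (δ * n) := (sum_image hg (f := fun n : ℕ ↦ f (δ * n))).symm
    _ ≤ ∑' n : ℕ, f (δ * n) := summable.sum_le_tsum _ fun n _ ↦ nonneg _ (hpos n)
    _ ≤ f 0 + δ⁻¹ * ∫ t in Set.Ioi 0, f t := tsum_le

theorem sum_comp_abs_sub_mul_int_le_integral (anti : AntitoneOn f (Set.Ici 0))
    (integrable : IntegrableOn f (Set.Ioi 0)) (nonneg : ∀ t ∈ Set.Ici 0, 0 ≤ f t)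
    (hδ : 0 < δ) (x : ℝ) (K : Finset ℤ) :
    ∑ k ∈ K, f |x - δ * k| ≤ 2 * (f 0 + δ⁻¹ * ∫ t in Set.Ioi 0, f t) := by
  set m := ⌊x / δ⌋
  have hm : δ * m ≤ x := by
    rw [mul_comm, ← le_div_iff₀ hδ]
    exact Int.floor_le _
  have hm' : x < δ * (m + 1) := by
    rw [mul_comm, ← div_lt_iff₀ hδ]
    exact Int.lt_floor_add_one _
  have left : ∑ k ∈ K with k ≤ m, f |x - δ * k| ≤ f 0 + δ⁻¹ * ∫ t in Set.Ioi 0, f t := by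
    refine sum_comp_le_integral_of_injOn (g := fun k ↦ (m - k).toNat) anti integrable nonneg hδ
      (fun k hk l hl h ↦ by grind) fun k hk ↦ ?_
    have hcast : (((m - k).toNat : ℕ) : ℝ) = m - k := by
      exact_mod_cast Int.toNat_of_nonneg (sub_nonneg.2 (mem_filter.1 hk).2)
    rw [hcast]
    linarith [le_abs_self (x - δ * k)]
  have right : ∑ k ∈ K with ¬k ≤ m, f |x - δ * k| ≤ f 0 + δ⁻¹ * ∫ t in Set.Ioi 0, f t := by
    refine sum_comp_le_integral_of_injOn (g := fun k ↦ (k - (m + 1)).toNat) anti integrable nonneg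
      hδ (fun k hk l hl h ↦ by grind) fun k hk ↦ ?_
    have hcast : (((k - (m + 1)).toNat : ℕ) : ℝ) = k - (m + 1) := by
      exact_mod_cast Int.toNat_of_nonneg (sub_nonneg.2 (not_le.1 (mem_filter.1 hk).2))
    rw [hcast]
    linarith [neg_le_abs (x - δ * k)]
  rw [← sum_filter_add_sum_filter_not K (· ≤ m), two_mul]
  exact add_le_add left right

end IntegralComparison

theorem exists_sum_one_add_abs_sub_rpow_neg_le {N : ℝ} (hN : 1 < N) :
    ∃ T > 0, ∀ {δ : ℝ}, 0 < δ → δ ≤ 1 → ∀ (x : ℝ) (K : Finset ℤ),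
      ∑ k ∈ K, (1 + |x - δ * k|) ^ (-N) ≤ T / δ := by
  set T := ∫ t in Set.Ioi (0 : ℝ), (1 + t) ^ (-N)
  have hT : 0 ≤ T := setIntegral_nonneg measurableSet_Ioi fun t ht ↦
    Real.rpow_nonneg (add_nonneg zero_le_one (le_of_lt ht)) _
  have anti : AntitoneOn (fun t : ℝ ↦ (1 + t) ^ (-N)) (Set.Ici 0) := fun s hs t _ hst ↦
    Real.rpow_le_rpow_of_nonpos (add_pos_of_pos_of_nonneg one_pos hs) (by gcongr) (by linarith)
  have integrable : IntegrableOn (fun t : ℝ ↦ (1 + t) ^ (-N)) (Set.Ioi 0) := by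
    simpa only [add_comm] using integrableOn_add_rpow_Ioi_of_lt (a := -N) (c := 0) (m := 1)
      (by linarith) (by norm_num)
  have nonneg : ∀ t ∈ Set.Ici (0 : ℝ), 0 ≤ (1 + t) ^ (-N) := fun t ht ↦
    Real.rpow_nonneg (add_nonneg zero_le_one ht) _
  refine ⟨2 * (1 + T), by positivity, fun {δ} hδ hδ1 x K ↦ ?_⟩
  calc ∑ k ∈ K, (1 + |x - δ * k|) ^ (-N) ≤ 2 * ((1 + 0) ^ (-N) + δ⁻¹ * T) :=
        sum_comp_abs_sub_mul_int_le_integral anti integrable nonneg hδ x K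
    _ = 2 * (1 + δ⁻¹ * T) := by rw [add_zero, Real.one_rpow]
    _ ≤ 2 * (δ⁻¹ + δ⁻¹ * T) := by
        gcongr
        exact (one_le_inv₀ hδ).2 hδ1
    _ = 2 * (1 + T) / δ := by ring

theorem rpow_neg_le_mul_rpow_neg {a b c N : ℝ} (ha : 0 < a) (hc : 0 < c) (hN : 0 ≤ N)
    (h : a ≤ c * b) : b ^ (-N) ≤ c ^ N * a ^ (-N) :=
  calc b ^ (-N) ≤ (a / c) ^ (-N) :=
        Real.rpow_le_rpow_of_nonpos (by positivity) ((div_le_iff₀' hc).2 h) (neg_nonpos.2 hN)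
    _ = c ^ N * a ^ (-N) := by
        rw [Real.div_rpow ha.le hc.le, Real.rpow_neg hc.le, div_inv_eq_mul, mul_comm]

theorem card_le_of_abs_add_le {K : Finset ℤ} {τ B : ℝ} (hB : 0 ≤ B)
    (hK : ∀ k ∈ K, |k + τ| ≤ B) : (#K : ℝ) ≤ 2 * B + 1 := by
  have hsub : K ⊆ Icc ⌈-B - τ⌉ ⌊B - τ⌋ := fun k hk ↦ by
    have := abs_le.1 (hK k hk)
    rw [mem_Icc, Int.ceil_le, Int.le_floor]
    constructor <;> linarith
  calc (#K : ℝ) ≤ #(Icc ⌈-B - τ⌉ ⌊B - τ⌋) := by exact_mod_cast card_le_card hsub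
    _ = max ((⌊B - τ⌋ + 1 - ⌈-B - τ⌉ : ℤ) : ℝ) 0 := by
        rw [Int.card_Icc]
        exact_mod_cast Int.toNat_eq_max _
    _ ≤ 2 * B + 1 := by
        push_cast
        have := Int.floor_le (B - τ)
        have := Int.le_ceil (-B - τ)
        exact max_le (by linarith) (by linarith)

theorem sum_zpow_le {r : ℝ} (hr0 : 0 < r) (hr1 : r < 1) {S : Finset ℤ} {m : ℤ}
    (hS : ∀ j ∈ S, m ≤ j) : ∑ j ∈ S, r ^ j ≤ r ^ m * (1 - r)⁻¹ := by
  have hinj : Set.InjOn (fun j ↦ (j - m).toNat) S := fun i hi j hj hij ↦ by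
    have := hS i hi
    have := hS j hj
    grind
  calc ∑ j ∈ S, r ^ j = r ^ m * ∑ n ∈ S.image fun j ↦ (j - m).toNat, r ^ n := by
        rw [sum_image hinj, mul_sum]
        refine sum_congr rfl fun j hj ↦ ?_
        rw [← zpow_natCast, ← zpow_add₀ hr0.ne', Int.toNat_of_nonneg (sub_nonneg.2 (hS j hj)),
          add_sub_cancel]
    _ ≤ r ^ m * (1 - r)⁻¹ := by
        rw [← tsum_geometric_of_lt_one hr0.le hr1]
        gcongr
        exact (summable_geometric_of_lt_one hr0.le hr1).sum_le_tsum _ fun _ _ ↦ by positivity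

section RelativeDistance

variable {c₁ l₁ c₂ l₂ : ℝ}

theorem abs_sub_add_le_diamUnion : |c₁ - c₂| + (l₁ + l₂) / 2 ≤ diamUnion c₁ l₁ c₂ l₂ := by
  unfold diamUnion
  rcases abs_cases (c₁ - c₂) with ⟨habs, -⟩ | ⟨habs, -⟩ <;> rw [habs]
  · linarith [le_max_left (c₁ + l₁ / 2) (c₂ + l₂ / 2), min_le_right (c₁ - l₁ / 2) (c₂ - l₂ / 2)]
  · linarith [le_max_right (c₁ + l₁ / 2) (c₂ + l₂ / 2), min_le_left (c₁ - l₁ / 2) (c₂ - l₂ / 2)]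

theorem diamUnion_le : diamUnion c₁ l₁ c₂ l₂ ≤ |c₁ - c₂| + max l₁ l₂ := by
  unfold diamUnion
  grind

theorem rdistI_nonneg (h₁ : 0 ≤ l₁) (h₂ : 0 ≤ l₂) : 0 ≤ rdistI c₁ l₁ c₂ l₂ :=
  div_nonneg (le_trans (by positivity) abs_sub_add_le_diamUnion) (le_max_of_le_left h₁)

theorem rdistI_le (h : 0 < max l₁ l₂) :
    rdistI c₁ l₁ c₂ l₂ ≤ |c₁ - c₂| / max l₁ l₂ + 1 := by
  rw [rdistI, div_add_one h.ne']
  gcongr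
  exact diamUnion_le

theorem abs_sub_le_mul_max_of_rdistI_le {A : ℝ} (h₁ : 0 < l₁) (h₂ : 0 ≤ l₂)
    (h : rdistI c₁ l₁ c₂ l₂ ≤ A) : |c₁ - c₂| ≤ A * max l₁ l₂ := by
  rw [rdistI, div_le_iff₀ (lt_max_of_lt_left h₁)] at h
  linarith [abs_sub_add_le_diamUnion (c₁ := c₁) (l₁ := l₁) (c₂ := c₂) (l₂ := l₂)]

end RelativeDistance

theorem one_add_abs_sub_rpow_neg_le {A N x y : ℝ} (hA : 0 < A) (hN : 0 ≤ N) (hx : |x| ≤ A) :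
    (1 + |y - x|) ^ (-N) ≤
      3 ^ N * ((1 + |y - x|) ^ (-N) + A ^ (-N)) * (1 + |y| / A) ^ (-N) := by
  have hmin : 0 < min (1 + |y - x|) A := lt_min (by positivity) hA
  have hy : |y| ≤ |y - x| + A := by linarith [abs_sub_abs_le_abs_sub y x]
  have hprod : min (1 + |y - x|) A * (1 + |y| / A) ≤ 3 * (1 + |y - x|) := calc
    min (1 + |y - x|) A * (1 + |y| / A)
      = min (1 + |y - x|) A + min (1 + |y - x|) A / A * |y| := by ring
    _ ≤ min (1 + |y - x|) A + min (1 + |y - x|) A / A * (|y - x| + A) := by gcongr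
    _ = 2 * min (1 + |y - x|) A + min (1 + |y - x|) A / A * |y - x| := by
        field_simp
        ring
    _ ≤ 2 * (1 + |y - x|) + 1 * |y - x| := by
        gcongr
        · exact min_le_left _ _
        · exact (div_le_one hA).2 (min_le_right _ _)
    _ ≤ 3 * (1 + |y - x|) := by linarith
  have hsplit : min (1 + |y - x|) A ^ (-N) ≤ (1 + |y - x|) ^ (-N) + A ^ (-N) := by
    rcases min_choice (1 + |y - x|) A with h | h <;> rw [h]
    · exact le_add_of_nonneg_right (by positivity)
    · exact le_add_of_nonneg_left (by positivity)
  calc (1 + |y - x|) ^ (-N)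
      ≤ 3 ^ N * (min (1 + |y - x|) A * (1 + |y| / A)) ^ (-N) :=
        rpow_neg_le_mul_rpow_neg (by positivity) three_pos hN hprod
    _ = 3 ^ N * min (1 + |y - x|) A ^ (-N) * (1 + |y| / A) ^ (-N) := by
        rw [Real.mul_rpow hmin.le (by positivity), mul_assoc]
    _ ≤ 3 ^ N * ((1 + |y - x|) ^ (-N) + A ^ (-N)) * (1 + |y| / A) ^ (-N) := by gcongr

theorem exists_sum_rpow_neg_le_of_abs_le {N : ℝ} (hN : 1 < N) :
    ∃ C > 0, ∀ {δ A : ℝ}, 0 < δ → δ ≤ 1 → 1 ≤ A → ∀ (y τ : ℝ) (K : Finset ℤ),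
      (∀ k ∈ K, |δ * (k + τ)| ≤ A) →
        ∑ k ∈ K, (1 + |y - δ * (k + τ)|) ^ (-N) ≤ C / δ * (1 + |y| / A) ^ (-N) := by
  obtain ⟨T, hT, hlattice⟩ := exists_sum_one_add_abs_sub_rpow_neg_le hN
  refine ⟨3 ^ N * (T + 3), by positivity, fun {δ A} hδ hδ1 hA y τ K hK ↦ ?_⟩
  have hA0 : 0 < A := one_pos.trans_le hA
  have htranslate : ∑ k ∈ K, (1 + |y - δ * (k + τ)|) ^ (-N) ≤ T / δ := by
    convert hlattice hδ hδ1 (y - δ * τ) K using 5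
    ring
  have hcard : (#K : ℝ) ≤ 3 * A / δ := by
    have hcount : (#K : ℝ) ≤ 2 * (A / δ) + 1 :=
      card_le_of_abs_add_le (τ := τ) (by positivity) fun k hk ↦ by
        rw [le_div_iff₀' hδ]
        simpa only [abs_mul, abs_of_pos hδ] using hK k hk
    have hone : 1 ≤ A / δ := (one_le_div hδ).2 (hδ1.trans hA)
    linarith [show 3 * A / δ = 3 * (A / δ) by ring]
  have hfar : #K * A ^ (-N) ≤ 3 / δ := calc
    #K * A ^ (-N) ≤ 3 * A / δ * A ^ (-1 : ℝ) := by gcongr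
    _ = 3 / δ := by
      rw [Real.rpow_neg_one]
      field_simp
  calc ∑ k ∈ K, (1 + |y - δ * (k + τ)|) ^ (-N)
      ≤ ∑ k ∈ K, 3 ^ N * ((1 + |y - δ * (k + τ)|) ^ (-N) + A ^ (-N)) * (1 + |y| / A) ^ (-N) :=
        sum_le_sum fun k hk ↦ one_add_abs_sub_rpow_neg_le hA0 (by linarith) (hK k hk)
    _ = 3 ^ N * (∑ k ∈ K, (1 + |y - δ * (k + τ)|) ^ (-N) + #K * A ^ (-N)) *
          (1 + |y| / A) ^ (-N) := by
        rw [← sum_mul, ← mul_sum, sum_add_distrib, sum_const, nsmul_eq_mul]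
    _ ≤ 3 ^ N * (T / δ + 3 / δ) * (1 + |y| / A) ^ (-N) := by gcongr
    _ = 3 ^ N * (T + 3) / δ * (1 + |y| / A) ^ (-N) := by ring

theorem sum_two_zpow_neg_div_rpow_le {α L R : ℝ} (hα : 0 < α) (hL : 0 < L) (hR : 0 ≤ R)
    {S : Finset ℤ} (hS : ∀ j ∈ S, (2 : ℝ) ^ (-j) ≤ R) :
    ∑ j ∈ S, ((2 : ℝ) ^ (-j) / L) ^ α ≤ (1 - 2 ^ (-α))⁻¹ * (R / L) ^ α := by
  have hr1 : (2 : ℝ) ^ (-α) < 1 := Real.rpow_lt_one_of_one_lt_of_neg one_lt_two (neg_lt_zero.2 hα)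
  have : 0 < 1 - (2 : ℝ) ^ (-α) := sub_pos.2 hr1
  rcases S.eq_empty_or_nonempty with rfl | hne
  · rw [sum_empty]
    positivity
  have hpow (j : ℤ) : ((2 : ℝ) ^ (-j) / L) ^ α = ((2 : ℝ) ^ (-α)) ^ j / L ^ α := by
    rw [Real.div_rpow (by positivity) hL.le, ← Real.rpow_intCast, ← Real.rpow_intCast,
      ← Real.rpow_mul two_pos.le, ← Real.rpow_mul two_pos.le]
    push_cast
    ring_nf
  calc ∑ j ∈ S, ((2 : ℝ) ^ (-j) / L) ^ α = (∑ j ∈ S, ((2 : ℝ) ^ (-α)) ^ j) / L ^ α := by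
        simp only [hpow, sum_div]
    _ ≤ ((2 : ℝ) ^ (-α)) ^ S.min' hne * (1 - 2 ^ (-α))⁻¹ / L ^ α := by
        gcongr
        exact sum_zpow_le (by positivity) hr1 S.min'_le
    _ = (1 - 2 ^ (-α))⁻¹ * ((2 : ℝ) ^ (-S.min' hne) / L) ^ α := by
        rw [hpow]
        ring
    _ ≤ (1 - 2 ^ (-α))⁻¹ * (R / L) ^ α := by
        gcongr
        exact hS _ (S.min'_mem hne)

/-- The summand `(|J|/|I|)^(θ + 3/2) (1 + |I|⁻¹ |c(I) - c(J)|)^(-N)`, where `I` has center `c` and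
length `L`, and `J = [2^{-j}k, 2^{-j}(k+1)]` is encoded by `p = (j, k)`. -/
noncomputable def dyadicTerm (θ N c L : ℝ) (p : ℤ × ℤ) : ℝ :=
  ((2 : ℝ) ^ (-p.1) / L) ^ (θ + 3 / 2) * (1 + |c - (2 : ℝ) ^ (-p.1) * (p.2 + 1 / 2)| / L) ^ (-N)

theorem dyadicTerm_nonneg {L : ℝ} (hL : 0 ≤ L) (θ N c : ℝ) (p : ℤ × ℤ) :
    0 ≤ dyadicTerm θ N c L p := by
  unfold dyadicTerm
  positivity

theorem one_add_abs_div_rpow_neg_le {A N R c L : ℝ} (hN : 0 ≤ N) (hA : 1 ≤ A) (hR : 0 < R)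
    (hRL : R ≤ L) :
    (1 + |c / L| / A) ^ (-N) ≤ 2 ^ N * (1 + A⁻¹ * rdistI c L 0 R) ^ (-N) := by
  have hL : 0 < L := hR.trans_le hRL
  have : 0 < A := one_pos.trans_le hA
  have hnonneg : 0 ≤ rdistI c L 0 R := rdistI_nonneg hL.le hR.le
  refine rpow_neg_le_mul_rpow_neg (by positivity) two_pos hN ?_
  have hrdist : rdistI c L 0 R ≤ |c / L| + 1 := by
    simpa [max_eq_left hRL, abs_div, abs_of_pos hL] using
      rdistI_le (c₁ := c) (c₂ := 0) (l₂ := R) (lt_max_of_lt_left hL)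
  calc 1 + A⁻¹ * rdistI c L 0 R ≤ 1 + A⁻¹ * (|c / L| + 1) := by gcongr
    _ = 1 + A⁻¹ + |c / L| / A := by ring
    _ ≤ 1 + 1 + 2 * (|c / L| / A) := by
        gcongr
        · exact inv_le_one_of_one_le₀ hA
        · exact le_mul_of_one_le_left (by positivity) one_le_two
    _ = 2 * (1 + |c / L| / A) := by ring

theorem exists_sum_dyadicTerm_level_le (θ : ℝ) {N : ℝ} (hN : 1 < N) :
    ∃ C > 0, ∀ {A R c L : ℝ}, 1 ≤ A → 0 < R → R ≤ L → ∀ (j : ℤ) (K : Finset ℤ),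
      (2 : ℝ) ^ (-j) ≤ R →
      (∀ k ∈ K, rdistI ((2 : ℝ) ^ (-j) * (k + 1 / 2)) ((2 : ℝ) ^ (-j)) 0 R ≤ A) →
        ∑ k ∈ K, dyadicTerm θ N c L (j, k) ≤
          C * ((2 : ℝ) ^ (-j) / L) ^ (θ + 1 / 2) * (1 + A⁻¹ * rdistI c L 0 R) ^ (-N) := by
  obtain ⟨C, hC, hsum⟩ := exists_sum_rpow_neg_le_of_abs_le hN
  refine ⟨C * 2 ^ N, by positivity, fun {A R c L} hA hR hRL j K hj hK ↦ ?_⟩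
  have hL : 0 < L := hR.trans_le hRL
  set δ := (2 : ℝ) ^ (-j) / L with hδ_def
  have hδ : 0 < δ := by positivity
  have hδ1 : δ ≤ 1 := (div_le_one hL).2 (hj.trans hRL)
  have hpoint (k : ℤ) : (2 : ℝ) ^ (-j) * (k + 1 / 2) = L * (δ * (k + 1 / 2)) := by
    rw [hδ_def]
    field_simp
  have hcenter : ∀ k ∈ K, |δ * (k + 1 / 2)| ≤ A := fun k hk ↦ by
    have h := abs_sub_le_mul_max_of_rdistI_le (by positivity) hR.le (hK k hk)
    rw [max_eq_right hj, sub_zero, hpoint, abs_mul, abs_of_pos hL] at h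
    nlinarith
  have hterm (k : ℤ) : dyadicTerm θ N c L (j, k) =
      δ ^ (θ + 3 / 2) * (1 + |c / L - δ * (k + 1 / 2)|) ^ (-N) := by
    have hscale : |c - L * (δ * (k + 1 / 2))| / L = |c / L - δ * (k + 1 / 2)| := by
      rw [← abs_of_pos hL, ← abs_div, abs_of_pos hL, sub_div, mul_div_cancel_left₀ _ hL.ne']
    rw [dyadicTerm, hpoint, hscale]
  have hexp : δ ^ (θ + 3 / 2) = δ ^ (θ + 1 / 2) * δ := by
    rw [← Real.rpow_add_one hδ.ne']
    ring_nf
  calc ∑ k ∈ K, dyadicTerm θ N c L (j, k)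
      = δ ^ (θ + 3 / 2) * ∑ k ∈ K, (1 + |c / L - δ * (k + 1 / 2)|) ^ (-N) := by
        simp only [hterm, mul_sum]
    _ ≤ δ ^ (θ + 3 / 2) * (C / δ * (1 + |c / L| / A) ^ (-N)) := by
        gcongr
        exact hsum hδ hδ1 hA _ _ K hcenter
    _ = C * δ ^ (θ + 1 / 2) * (1 + |c / L| / A) ^ (-N) := by
        rw [hexp]
        field_simp
    _ ≤ C * δ ^ (θ + 1 / 2) * (2 ^ N * (1 + A⁻¹ * rdistI c L 0 R) ^ (-N)) := by
        gcongr
        exact one_add_abs_div_rpow_neg_le (by linarith) hA hR hRL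
    _ = C * 2 ^ N * δ ^ (θ + 1 / 2) * (1 + A⁻¹ * rdistI c L 0 R) ^ (-N) := by ring

theorem exists_sum_dyadicTerm_le {θ N : ℝ} (hθ : -1 / 2 < θ) (hN : 1 < N) :
    ∃ C > 0, ∀ {A R c L : ℝ}, 1 ≤ A → 0 < R → R ≤ L → ∀ F : Finset (ℤ × ℤ),
      (∀ p ∈ F, (2 : ℝ) ^ (-p.1) ≤ R ∧
        rdistI ((2 : ℝ) ^ (-p.1) * (p.2 + 1 / 2)) ((2 : ℝ) ^ (-p.1)) 0 R ≤ A) →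
        ∑ p ∈ F, dyadicTerm θ N c L p ≤
          C * (R / L) ^ (θ + 1 / 2) * (1 + A⁻¹ * rdistI c L 0 R) ^ (-N) := by
  obtain ⟨C, hC, hlevel⟩ := exists_sum_dyadicTerm_level_le θ hN
  have hα : 0 < θ + 1 / 2 := by linarith
  have hratio : (2 : ℝ) ^ (-(θ + 1 / 2)) < 1 :=
    Real.rpow_lt_one_of_one_lt_of_neg one_lt_two (neg_lt_zero.2 hα)
  refine ⟨C * (1 - 2 ^ (-(θ + 1 / 2)))⁻¹, mul_pos hC (inv_pos.2 (sub_pos.2 hratio)),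
    fun {A R c L} hA hR hRL F hF ↦ ?_⟩
  have hL : 0 < L := hR.trans_le hRL
  set W := (1 + A⁻¹ * rdistI c L 0 R) ^ (-N)
  have hW : 0 ≤ W := by
    have := rdistI_nonneg (c₁ := c) (c₂ := 0) hL.le hR.le
    positivity
  set level : ℤ → Finset ℤ := fun j ↦ F.preimage (Prod.mk j) (Prod.mk_right_injective j).injOn
  have hscale : ∀ j ∈ F.image Prod.fst, (2 : ℝ) ^ (-j) ≤ R :=
    forall_mem_image.2 fun p hp ↦ (hF p hp).1
  calc ∑ p ∈ F, dyadicTerm θ N c L p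
      = ∑ j ∈ F.image Prod.fst, ∑ k ∈ level j, dyadicTerm θ N c L (j, k) :=
        sum_finset_product _ _ _ fun p ↦ by
          simpa [level] using fun hp ↦ ⟨p.2, hp⟩
    _ ≤ ∑ j ∈ F.image Prod.fst, C * ((2 : ℝ) ^ (-j) / L) ^ (θ + 1 / 2) * W :=
        sum_le_sum fun j hj ↦ hlevel hA hR hRL j _ (hscale j hj) fun k hk ↦
          (hF (j, k) (mem_preimage.1 hk)).2
    _ = C * (∑ j ∈ F.image Prod.fst, ((2 : ℝ) ^ (-j) / L) ^ (θ + 1 / 2)) * W := by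
        rw [← sum_mul, ← mul_sum]
    _ ≤ C * ((1 - 2 ^ (-(θ + 1 / 2)))⁻¹ * (R / L) ^ (θ + 1 / 2)) * W := by
        gcongr
        exact sum_two_zpow_neg_div_rpow_le hα hL hR.le hscale
    _ = C * (1 - 2 ^ (-(θ + 1 / 2)))⁻¹ * (R / L) ^ (θ + 1 / 2) * W := by ring

theorem statement13_general {θ N : ℝ} (hθ : -1 / 2 < θ) (hN : 1 < N) :
    ∃ C > 0, ∀ {A R c L : ℝ}, 1 ≤ A → 0 < R → R ≤ L → ∀ S : Set (ℤ × ℤ),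
      (∀ p ∈ S, (2 : ℝ) ^ (-p.1) ≤ R ∧
        rdistI ((2 : ℝ) ^ (-p.1) * (p.2 + 1 / 2)) ((2 : ℝ) ^ (-p.1)) 0 R ≤ A) →
        Summable (fun p : S ↦ dyadicTerm θ N c L p) ∧
          ∑' p : S, dyadicTerm θ N c L p ≤
            C * (R / L) ^ (θ + 1 / 2) * (1 + A⁻¹ * rdistI c L 0 R) ^ (-N) := by
  obtain ⟨C, hC, hfinite⟩ := exists_sum_dyadicTerm_le hθ hN
  refine ⟨C, hC, fun {A R c L} hA hR hRL S hS ↦ ?_⟩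
  have hnonneg (p : S) : 0 ≤ dyadicTerm θ N c L p :=
    dyadicTerm_nonneg (hR.le.trans hRL) θ N c p
  have hpartial (F : Finset S) : ∑ p ∈ F, dyadicTerm θ N c L p ≤
      C * (R / L) ^ (θ + 1 / 2) * (1 + A⁻¹ * rdistI c L 0 R) ^ (-N) := by
    have h := hfinite (c := c) hA hR hRL (F.map (Function.Embedding.subtype (· ∈ S)))
      fun p hp ↦ hS p (property_of_mem_map_subtype F hp)
    rwa [sum_map] at h
  exact ⟨summable_of_sum_le hnonneg hpartial, Real.tsum_le_of_sum_le hnonneg hpartial⟩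

/-- For `|I| > 2^{M+2}`, the sum over dyadic lagom intervals `J ∈ 𝒟_M` of
`(|J|/|I|)^{θ_p+3/2}(1+|I|⁻¹|c(I)−c(J)|)^{−N}` is bounded by
`C' (2^M/|I|)^{θ_p+1/2}(1+M⁻¹ rdist(I,𝔹_{2^M}))^{−N}`. -/
theorem statement13 (θp NN : ℝ) (hθ : 0 ≤ θp) (hN : θp + 3/2 < NN) :
    ∃ C' > 0, ∀ M : ℕ, 1 ≤ M → ∀ cI lI : ℝ, (2 : ℝ) ^ (M + 2) < lI →
      (∑' p : {q : ℤ × ℤ // DyadicLagom M q},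
          ((2 : ℝ) ^ (-p.val.1) / lI) ^ (θp + 3/2) *
            (1 + |cI - (2 : ℝ) ^ (-p.val.1) * (p.val.2 + 1/2)| / lI) ^ (-NN))
        ≤ C' * ((2 : ℝ) ^ M / lI) ^ (θp + 1/2) *
            (1 + (M : ℝ)⁻¹ * rdistI cI lI 0 (2 ^ M)) ^ (-NN) := by
  obtain ⟨C, hC, hbound⟩ := statement13_general (θ := θp) (N := NN) (by linarith) (by linarith)
  exact ⟨C, hC, fun M hM cI lI hI ↦ (hbound (by exact_mod_cast hM) (by positivity)
    ((pow_le_pow_right₀ one_le_two (M.le_add_right 2)).trans hI.le)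
    {q | DyadicLagom M q} fun _ hq ↦ hq.2).2⟩
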